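/- Let A be a simple rational polyomino, and let B and D₁,…,D_r be pairwise disjoint subsets of the interior of A, each of which is either a simple rational polyomino or a singleton. Then for any rational ρ with ℒ(B) < ρ < ℒ(A \ ⋃ᵢDᵢ), there exists a simple rational polyomino C with ℒ(C) = ρ and B ⊂ C ⊂ A° \ ⋃ᵢDᵢ. -/

import Mathlib

open Set MeasureTheory

/-- A closed axis-parallel rectangle in ℝ² with rational corners (nondegenerate). -/
def IsRatRect (R : Set (ℝ × ℝ)) : Prop :=
  ∃ a b c d : ℚ, a < b ∧ c < d ∧ R = Icc (a : ℝ) (b : ℝ) ×ˢ Icc (c : ℝ) (d : ℝ)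

/-- A rational polyomino: a union of finitely many closed rational rectangles. -/
def IsRatPolyomino (P : Set (ℝ × ℝ)) : Prop :=
  ∃ (n : ℕ) (R : Fin n → Set (ℝ × ℝ)), (∀ i, IsRatRect (R i)) ∧ P = ⋃ i, R i

/-- A simple rational polyomino: both its interior and its complement are connected. -/
def IsSimpleRatPolyomino (P : Set (ℝ × ℝ)) : Prop :=
  IsRatPolyomino P ∧ IsConnected (interior P) ∧ IsConnected Pᶜ

/-!
Removing disjoint closed sets with connected complements from a connected open subset of the plane
leaves it connected, so it is enough to treat a simple polyomino `B` inside a connected open set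
`U`. Let `P` be a simple polyomino in `U`. Gluing to `P` a rectangle that meets it exactly along one
full side keeps it simple, and cutting the rectangle shorter realises every intermediate rational
area. The points of `U` reached from `P` by such steps are dense: inside a small square, a
horizontal rectangle followed by a vertical one reaches any nonempty open set. Consequently `P` can
be grown, disjointly from a rectangle `Q ⊆ U \ P`, until a last rectangle of this kind joins it to
the left of `Q`, passes below it, and carries a column containing `Q`. Absorbing in this way
finitely many disjoint rectangles that fill `U \ B` up to small measure makes the area exceed `ρ`,
and area exactly `ρ` occurs along the way.
-/

open Metric

/-! ### Connectedness of unions and intersections of open sets -/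

section Connectedness

variable {X : Type*} [TopologicalSpace X] {U V : Set X}

theorem isPreconnected_of_union_of_inter (hU : IsOpen U) (hV : IsOpen V)
    (hUV : IsPreconnected (U ∪ V)) (hI : IsPreconnected (U ∩ V)) : IsPreconnected V := by
  rw [isPreconnected_iff_subset_of_disjoint]
  intro u v hu hv huv hdisj
  wlog hIu : U ∩ V ⊆ u generalizing u v
  · have hIv : U ∩ V ⊆ v :=
      (isPreconnected_iff_subset_of_disjoint.1 hI u v hu hv (inter_subset_right.trans huv)
        (by rw [inter_assoc, hdisj, inter_empty])).resolve_left hIu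
    exact (this v u hv hu (by rwa [union_comm]) (by rwa [inter_comm v u]) hIv).symm
  have hVuv : ∀ x ∈ V, x ∈ u → x ∉ v := fun x hx hxu hxv => hdisj.subset ⟨hx, hxu, hxv⟩
  have hcover : U ∪ V ⊆ (U ∪ V ∩ u) ∪ V ∩ v := by grind
  have hempty : (U ∪ V) ∩ ((U ∪ V ∩ u) ∩ (V ∩ v)) = ∅ := by
    rw [eq_empty_iff_forall_notMem]; grind
  rcases isPreconnected_iff_subset_of_disjoint.1 hUV _ _ (hU.union (hV.inter hu)) (hV.inter hv)
    hcover hempty with h | h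
  · exact Or.inl fun x hx => (h (Or.inr hx)).elim (fun hxU => hIu ⟨hxU, hx⟩) And.right
  · exact Or.inr fun x hx => (h (Or.inr hx)).2

/-- The two projected maps glue to a map on `X`; by simple connectedness it lifts globally, and
uniqueness of lifts identifies this lift with `α` on `U` and with `β` on `V`. -/
theorem eqOn_inter_of_isCoveringMap [SimplyConnectedSpace X] [LocallyPathConnectedSpace X]
    {E Y : Type*} [TopologicalSpace E] [TopologicalSpace Y] {p : E → Y} (hp : IsCoveringMap p)
    (hU : IsOpen U) (hV : IsOpen V) (hUc : IsPreconnected U) (hVc : IsPreconnected V)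
    (hUV : U ∪ V = univ) {α β : X → E} (hα : ContinuousOn α U) (hβ : ContinuousOn β V)
    (hαβ : EqOn (p ∘ α) (p ∘ β) (U ∩ V)) {x : X} (hx : x ∈ U ∩ V) (hαβx : α x = β x) :
    EqOn α β (U ∩ V) := by
  classical
  let f : X → Y := U.piecewise (p ∘ α) (p ∘ β)
  have hfU : EqOn f (p ∘ α) U := piecewise_eqOn _ _ _
  have hfV : EqOn f (p ∘ β) V := fun z hzV => by
    by_cases hzU : z ∈ U
    · exact (hfU hzU).trans (hαβ ⟨hzU, hzV⟩)
    · exact piecewise_eq_of_notMem _ _ _ hzU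
  have hf : Continuous f := by
    rw [← continuousOn_univ, ← hUV]
    exact ((hp.continuous.comp_continuousOn hα).congr hfU).union_of_isOpen
      ((hp.continuous.comp_continuousOn hβ).congr hfV) hU hV
  obtain ⟨g, ⟨hgx, hgf⟩, -⟩ :=
    hp.existsUnique_continuousMap_lifts ⟨f, hf⟩ x (α x) (hfU hx.1).symm
  replace hgf : p ∘ g = f := hgf
  have hgα : EqOn g α U :=
    hp.eqOn_of_comp_eqOn hUc g.continuous.continuousOn hα (hgf ▸ hfU) hx.1 hgx
  have hgβ : EqOn g β V :=
    hp.eqOn_of_comp_eqOn hVc g.continuous.continuousOn hβ (hgf ▸ hfV) hx.2 (hgx.trans hαβx)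
  exact fun z hz => (hgα hz.1).symm.trans (hgβ hz.2)

/-- If the overlap split into two open pieces, cutting a Urysohn function off outside one of them
would give two lifts to `ℝ` of the same circle-valued map, agreeing on one piece only. -/
theorem isPreconnected_inter_of_union_eq_univ [SimplyConnectedSpace X]
    [LocallyPathConnectedSpace X] [NormalSpace X] (hU : IsOpen U) (hV : IsOpen V)
    (hUc : IsPreconnected U) (hVc : IsPreconnected V) (hUV : U ∪ V = univ) :
    IsPreconnected (U ∩ V) := by
  classical
  rintro u v hu hv huv ⟨x, hx, hxu⟩ ⟨y, hy, hyv⟩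
  by_contra hne
  obtain ⟨φ, hφV, hφU, -⟩ := exists_continuous_zero_one_of_isClosed hV.isClosed_compl
    hU.isClosed_compl (disjoint_compl_left_iff_subset.2 (compl_subset_iff_union.2 hUV))
  set O : Set X := U ∩ V ∩ u
  have hO : U ∩ V ∩ frontier O = ∅ := by
    refine eq_empty_of_forall_notMem fun z ⟨hz, hzO⟩ => ?_
    rw [((hU.inter hV).inter hu).frontier_eq] at hzO
    have hzv : z ∈ v := (huv hz).resolve_left fun hzu => hzO.2 ⟨hz, hzu⟩
    obtain ⟨w, ⟨-, hwv⟩, hwUV, hwu⟩ :=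
      mem_closure_iff.1 hzO.1 _ ((hU.inter hV).inter hv) ⟨hz, hzv⟩
    exact hne ⟨w, hwUV, hwu, hwv⟩
  have hα : ContinuousOn (O.piecewise φ 0) U :=
    ContinuousOn.piecewise (fun z hz => hφV fun hzV => hO.subset ⟨⟨hz.1, hzV⟩, hz.2⟩)
      φ.continuous.continuousOn continuousOn_const
  have hβ : ContinuousOn (O.piecewise φ 1) V :=
    ContinuousOn.piecewise (fun z hz => hφU fun hzU => hO.subset ⟨⟨hzU, hz.1⟩, hz.2⟩)
      φ.continuous.continuousOn continuousOn_const
  have hαβ : EqOn ((↑) ∘ O.piecewise φ 0 : X → AddCircle (1 : ℝ)) ((↑) ∘ O.piecewise φ 1)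
      (U ∩ V) := fun z _ => by
    by_cases hz : z ∈ O <;> simp [hz, AddCircle.coe_period]
  have hxO : x ∈ O := ⟨hx, hxu⟩
  have hyO : y ∉ O := fun h => hne ⟨y, hy, h.2, hyv⟩
  have hy₀₁ := eqOn_inter_of_isCoveringMap (AddCircle.isCoveringMap_coe (1 : ℝ)) hU hV hUc hVc hUV
    hα hβ hαβ hx (by simp [hxO]) hy
  simp [hyO] at hy₀₁

theorem isPreconnected_sdiff [SimplyConnectedSpace X] [LocallyPathConnectedSpace X]
    [NormalSpace X] {D : Set X} (hU : IsOpen U) (hUc : IsPreconnected U) (hD : IsClosed D)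
    (hDc : IsPreconnected Dᶜ) (hDU : D ⊆ U) : IsPreconnected (U \ D) :=
  isPreconnected_inter_of_union_eq_univ hU hD.isOpen_compl hUc hDc <|
    eq_univ_of_forall fun x => (em (x ∈ D)).imp (@hDU x) id

theorem isPreconnected_sdiff_biUnion [SimplyConnectedSpace X] [LocallyPathConnectedSpace X]
    [NormalSpace X] {ι : Type*} {D : ι → Set X} {s : Finset ι} (hU : IsOpen U)
    (hUc : IsPreconnected U) (hD : ∀ i ∈ s, IsClosed (D i))
    (hDc : ∀ i ∈ s, IsPreconnected (D i)ᶜ) (hDU : ∀ i ∈ s, D i ⊆ U)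
    (hDD : (s : Set ι).PairwiseDisjoint D) : IsPreconnected (U \ ⋃ i ∈ s, D i) := by
  classical
  induction s using Finset.induction_on with
  | empty => simpa using hUc
  | insert i s his ih =>
    simp only [Finset.forall_mem_insert] at hD hDc hDU
    rw [Finset.coe_insert, pairwiseDisjoint_insert_of_notMem (by simpa using his)] at hDD
    have hsub : D i ⊆ U \ ⋃ j ∈ s, D j :=
      subset_sdiff.2 ⟨hDU.1, disjoint_iUnion₂_right.2 hDD.2⟩
    rw [Finset.set_biUnion_insert, union_comm, ← Set.sdiff_sdiff]
    exact isPreconnected_sdiff (hU.sdiff (isClosed_biUnion_finset hD.2))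
      (ih hD.2 hDc.2 hDU.2 hDD.1) hD.1 hDc.1 hsub

end Connectedness

/-! ### Rational rectangles and polyominoes -/

theorem isPreconnected_Ioo_prod_Ioo (a b c d : ℝ) : IsPreconnected (Ioo a b ×ˢ Ioo c d) :=
  isPreconnected_Ioo.prod isPreconnected_Ioo

theorem compl_Icc_prod_Icc (a b c d : ℝ) : (Icc a b ×ˢ Icc c d)ᶜ =
    Iio a ×ˢ univ ∪ univ ×ˢ Iio c ∪ Ioi b ×ˢ univ ∪ univ ×ˢ Ioi d := by
  ext ⟨x, y⟩
  simp only [mem_compl_iff, mem_prod, mem_Icc, mem_union, mem_Iio, mem_Ioi, mem_univ, true_and,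
    and_true, not_and_or, not_le]
  tauto

theorem isConnected_compl_Icc_prod_Icc (a b c d : ℝ) :
    IsConnected (Icc a b ×ˢ Icc c d)ᶜ := by
  rw [compl_Icc_prod_Icc]
  refine (((isConnected_Iio.prod isConnected_univ).union ⟨(a - 1, c - 1), ?_⟩
    (isConnected_univ.prod isConnected_Iio)).union ⟨(b + 1, c - 1), ?_⟩
    (isConnected_Ioi.prod isConnected_univ)).union ⟨(b + 1, d + 1), ?_⟩
    (isConnected_univ.prod isConnected_Ioi) <;> simp

theorem exists_Icc_prod_Icc_subset_of_isOpen {U : Set (ℝ × ℝ)} (hU : IsOpen U) {a b c d : ℝ}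
    (hab : a ≤ b) (hcd : c ≤ d) (h : Icc a b ×ˢ Icc c d ⊆ U) :
    ∃ δ > 0, Icc (a - δ) (b + δ) ×ˢ Icc (c - δ) (d + δ) ⊆ U := by
  obtain ⟨δ, hδ, hsub⟩ :=
    (isCompact_Icc.prod isCompact_Icc).exists_cthickening_subset_open hU h
  refine ⟨δ, hδ, fun ⟨x, y⟩ ⟨hx, hy⟩ => hsub <|
    mem_cthickening_of_dist_le _ (max a (min x b), max c (min y d)) _ _ ⟨?_, ?_⟩ ?_⟩
  · exact ⟨le_max_left .., max_le hab (min_le_right ..)⟩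
  · exact ⟨le_max_left .., max_le hcd (min_le_right ..)⟩
  · simp only [mem_Icc] at hx hy
    rw [Prod.dist_eq, Real.dist_eq, Real.dist_eq]
    grind

theorem volume_Icc_prod_Icc {a b : ℝ} (hab : a ≤ b) (c d : ℝ) :
    volume (Icc a b ×ˢ Icc c d) = ENNReal.ofReal ((b - a) * (d - c)) := by
  rw [Measure.volume_eq_prod, Measure.prod_prod, Real.volume_Icc, Real.volume_Icc,
    ENNReal.ofReal_mul (sub_nonneg.2 hab)]

theorem exists_biInter_Icc_prod_Icc_eq {ι : Type*} (a b c d : ι → ℚ) {s : Finset ι}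
    (hs : s.Nonempty) :
    ∃ a' b' c' d' : ℚ, ⋂ i ∈ s, Icc (a i : ℝ) (b i) ×ˢ Icc (c i : ℝ) (d i) =
      Icc (a' : ℝ) b' ×ˢ Icc (c' : ℝ) d' := by
  induction hs using Finset.Nonempty.cons_induction with
  | singleton i => exact ⟨a i, b i, c i, d i, by simp⟩
  | cons i s hi _ ih =>
    obtain ⟨a', b', c', d', h⟩ := ih
    refine ⟨max (a i) a', min (b i) b', max (c i) c', min (d i) d', ?_⟩
    classical
    rw [Finset.cons_eq_insert, Finset.set_biInter_insert, h, prod_inter_prod, Icc_inter_Icc,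
      Icc_inter_Icc]
    simp only [Rat.cast_max, Rat.cast_min]

namespace IsRatRect

variable {R : Set (ℝ × ℝ)}

theorem isCompact (h : IsRatRect R) : IsCompact R := by
  obtain ⟨a, b, c, d, -, -, rfl⟩ := h
  exact isCompact_Icc.prod isCompact_Icc

theorem isClosed (h : IsRatRect R) : IsClosed R :=
  h.isCompact.isClosed

theorem convex (h : IsRatRect R) : Convex ℝ R := by
  obtain ⟨a, b, c, d, -, -, rfl⟩ := h
  exact (convex_Icc _ _).prod (convex_Icc _ _)

theorem nonempty_interior (h : IsRatRect R) : (interior R).Nonempty := by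
  obtain ⟨a, b, c, d, hab, hcd, rfl⟩ := h
  rw [interior_prod_eq, interior_Icc, interior_Icc]
  exact (nonempty_Ioo.2 (Rat.cast_lt.2 hab)).prod (nonempty_Ioo.2 (Rat.cast_lt.2 hcd))

theorem subset_closure_interior (h : IsRatRect R) : R ⊆ closure (interior R) := by
  rw [h.convex.closure_interior_eq_closure_of_nonempty_interior h.nonempty_interior]
  exact subset_closure

theorem isRatPolyomino (h : IsRatRect R) : IsRatPolyomino R :=
  ⟨1, fun _ => R, fun _ => h, (iUnion_const R).symm⟩

theorem isSimpleRatPolyomino (h : IsRatRect R) : IsSimpleRatPolyomino R := by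
  refine ⟨h.isRatPolyomino, ⟨h.nonempty_interior, h.convex.interior.isPreconnected⟩, ?_⟩
  obtain ⟨a, b, c, d, -, -, rfl⟩ := h
  exact isConnected_compl_Icc_prod_Icc ..

end IsRatRect

theorem exists_isRatRect_between_balls (x : ℝ × ℝ) {r : ℝ} (hr : 0 < r) :
    ∃ R, IsRatRect R ∧ closedBall x (r / 2) ⊆ R ∧ R ⊆ ball x r := by
  have key : ∀ t : ℝ, ∃ a b : ℚ, a < b ∧ closedBall t (r / 2) ⊆ Icc (a : ℝ) b ∧
      Icc (a : ℝ) b ⊆ ball t r := fun t => by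
    obtain ⟨a, ha⟩ := exists_rat_btwn (show t - r < t - r / 2 by linarith)
    obtain ⟨b, hb⟩ := exists_rat_btwn (show t + r / 2 < t + r by linarith)
    refine ⟨a, b, by exact_mod_cast (by linarith : (a : ℝ) < b), ?_, ?_⟩
    · rw [Real.closedBall_eq_Icc]
      exact Icc_subset_Icc ha.2.le hb.1.le
    · rw [Real.ball_eq_Ioo]
      exact Icc_subset_Ioo ha.1 hb.2
  obtain ⟨a, b, hab, hab₁, hab₂⟩ := key x.1
  obtain ⟨c, d, hcd, hcd₁, hcd₂⟩ := key x.2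
  exact ⟨_, ⟨a, b, c, d, hab, hcd, rfl⟩,
    (closedBall_prod_same x.1 x.2 (r / 2)).symm.subset.trans (prod_mono hab₁ hcd₁),
    (prod_mono hab₂ hcd₂).trans (ball_prod_same x.1 x.2 r).subset⟩

namespace IsRatPolyomino

variable {P R : Set (ℝ × ℝ)}

theorem isCompact (h : IsRatPolyomino P) : IsCompact P := by
  obtain ⟨n, R, hR, rfl⟩ := h
  exact isCompact_iUnion fun i => (hR i).isCompact

theorem isClosed (h : IsRatPolyomino P) : IsClosed P :=
  h.isCompact.isClosed

theorem volume_ne_top (h : IsRatPolyomino P) : volume P ≠ ⊤ :=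
  h.isCompact.measure_ne_top

theorem subset_closure_interior (h : IsRatPolyomino P) : P ⊆ closure (interior P) := by
  obtain ⟨n, R, hR, rfl⟩ := h
  exact iUnion_subset fun i =>
    (hR i).subset_closure_interior.trans (closure_mono (interior_mono (subset_iUnion R i)))

theorem volume_sdiff_interior (h : IsRatPolyomino P) : volume (P \ interior P) = 0 := by
  obtain ⟨n, R, hR, rfl⟩ := h
  have hsub : (⋃ i, R i) \ interior (⋃ i, R i) ⊆ ⋃ i, frontier (R i) := by
    rintro x ⟨hx, hxint⟩
    obtain ⟨i, hi⟩ := mem_iUnion.1 hx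
    exact mem_iUnion.2 ⟨i, subset_closure hi, fun h => hxint (interior_mono (subset_iUnion R i) h)⟩
  exact measure_mono_null hsub (measure_iUnion_null fun i => (hR i).convex.addHaar_frontier volume)

theorem union_isRatRect (h : IsRatPolyomino P) (hR : IsRatRect R) : IsRatPolyomino (P ∪ R) := by
  obtain ⟨n, S, hS, rfl⟩ := h
  refine ⟨n + 1, Fin.cons R S, Fin.cases hR hS, ?_⟩
  ext x
  simp only [mem_union, mem_iUnion, Fin.exists_fin_succ, Fin.cons_zero, Fin.cons_succ]
  exact or_comm

theorem exists_rat_volume_eq (h : IsRatPolyomino P) :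
    ∃ v : ℚ, 0 ≤ v ∧ volume P = ENNReal.ofReal v := by
  have hP := h.volume_ne_top
  obtain ⟨n, R, hR, rfl⟩ := h
  have hrat : volume.real (⋃ i, R i) ∈ (Rat.castHom ℝ).range := by
    have hinter (s : Finset (Fin n)) (hs : s.Nonempty) :
        volume.real (⋂ i ∈ s, R i) ∈ (Rat.castHom ℝ).range := by
      choose a b c d _ _ hR using hR
      obtain rfl := funext hR
      obtain ⟨a', b', c', d', h⟩ := exists_biInter_Icc_prod_Icc_eq a b c d hs
      refine ⟨max (b' - a') 0 * max (d' - c') 0, ?_⟩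
      rw [h, Measure.volume_eq_prod, measureReal_prod_prod, Real.volume_real_Icc,
        Real.volume_real_Icc]
      simp
    have hsum := measureReal_biUnion_eq_sum_powerset (μ := volume) (t := Finset.univ)
      (fun i _ => (hR i).isClosed.measurableSet) (fun i _ => (hR i).isCompact.measure_ne_top)
    simp only [Finset.mem_univ, iUnion_true] at hsum
    rw [hsum]
    exact sum_mem fun s hs => mul_mem (pow_mem (neg_mem (one_mem _)) _)
      (hinter s (Finset.mem_filter.1 hs).2)
  obtain ⟨v, hv⟩ := hrat
  replace hv : (v : ℝ) = volume.real (⋃ i, R i) := hv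
  refine ⟨v, by exact_mod_cast hv ▸ measureReal_nonneg, ?_⟩
  rw [hv, ofReal_measureReal hP]

end IsRatPolyomino

/-! ### Growing polyominoes -/

/-- `GrowsTo P Q` says that the simple rational polyomino `Q` contains `P` and that every rational
area between those of `P` and `Q` is realised by a simple rational polyomino between `P` and `Q`.
-/
structure GrowsTo (P Q : Set (ℝ × ℝ)) : Prop where
  isSimple : IsSimpleRatPolyomino Q
  subset : P ⊆ Q
  exists_volume_eq : ∀ t : ℚ, volume P ≤ ENNReal.ofReal t → ENNReal.ofReal t ≤ volume Q →
    ∃ C, IsSimpleRatPolyomino C ∧ P ⊆ C ∧ C ⊆ Q ∧ volume C = ENNReal.ofReal t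

namespace GrowsTo

variable {P Q R : Set (ℝ × ℝ)}

theorem refl (hP : IsSimpleRatPolyomino P) : GrowsTo P P :=
  ⟨hP, Subset.rfl, fun _ h₁ h₂ => ⟨P, hP, Subset.rfl, Subset.rfl, h₁.antisymm h₂⟩⟩

theorem trans (hPQ : GrowsTo P Q) (hQR : GrowsTo Q R) : GrowsTo P R := by
  refine ⟨hQR.isSimple, hPQ.subset.trans hQR.subset, fun t hPt htR => ?_⟩
  rcases le_total (ENNReal.ofReal t) (volume Q) with htQ | hQt
  · obtain ⟨C, hC, hPC, hCQ, hvol⟩ := hPQ.exists_volume_eq t hPt htQ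
    exact ⟨C, hC, hPC, hCQ.trans hQR.subset, hvol⟩
  · obtain ⟨C, hC, hQC, hCR, hvol⟩ := hQR.exists_volume_eq t hQt htR
    exact ⟨C, hC, hPQ.subset.trans hQC, hCR, hvol⟩

end GrowsTo

/-- The rectangle `[q, m] × [c, d]` can be glued to `P` along its left side: `P` fills a strip to
the left of that side and misses a neighbourhood of the three other sides. -/
structure CanAttachRight (P : Set (ℝ × ℝ)) (q m c d : ℝ) : Prop where
  left : ∃ a < q, Icc a q ×ˢ Icc c d ⊆ P
  right : ∃ δ > 0, Disjoint P (Ioo q (m + δ) ×ˢ Ioo (c - δ) (d + δ))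

theorem isPreconnected_Ioo_prod_Ioo_sdiff {q m m' c c' d d' : ℝ} (hqm : q ≤ m) (hm : m < m')
    (hc : c' < c) (hcd : c ≤ d) (hd : d < d') :
    IsPreconnected ((Ioo q m' ×ˢ Ioo c' d') \ (Icc q m ×ˢ Icc c d)) := by
  have hunion : (Ioo q m' ×ˢ Ioo c' d') \ (Icc q m ×ˢ Icc c d) =
      Ioo q m' ×ˢ Ioo c' c ∪ Ioo m m' ×ˢ Ioo c' d' ∪ Ioo q m' ×ˢ Ioo d d' := by
    ext ⟨x, y⟩
    simp only [mem_sdiff, mem_union, mem_prod, mem_Ioo, mem_Icc]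
    grind
  obtain ⟨x, hmx, hxm⟩ := exists_between hm
  obtain ⟨y, hcy, hyc⟩ := exists_between hc
  obtain ⟨z, hdz, hzd⟩ := exists_between hd
  rw [hunion]
  refine .union' ⟨(x, z), ?_⟩ (.union' ⟨(x, y), ?_⟩ (isPreconnected_Ioo_prod_Ioo _ _ _ _)
    (isPreconnected_Ioo_prod_Ioo _ _ _ _)) (isPreconnected_Ioo_prod_Ioo _ _ _ _)
  all_goals simp only [mem_union, mem_inter_iff, mem_prod, mem_Ioo]; grind

namespace CanAttachRight

variable {P : Set (ℝ × ℝ)} {q m m' c d : ℝ}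

theorem mono (h : CanAttachRight P q m c d) (hm : m' ≤ m) : CanAttachRight P q m' c d := by
  obtain ⟨δ, hδ, hdisj⟩ := h.right
  exact ⟨h.left, δ, hδ, hdisj.mono_right (prod_mono (Ioo_subset_Ioo_right (by linarith)) le_rfl)⟩

theorem isConnected_interior_union (h : CanAttachRight P q m c d) (hqm : q < m) (hcd : c < d)
    (hP : IsConnected (interior P)) (hPcl : P ⊆ closure (interior P)) :
    IsConnected (interior (P ∪ Icc q m ×ˢ Icc c d)) := by
  obtain ⟨a, haq, haP⟩ := h.left
  set E : Set (ℝ × ℝ) := Ioo a m ×ˢ Ioo c d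
  have hE : IsOpen E := isOpen_Ioo.prod isOpen_Ioo
  have hsub : interior P ∪ E ⊆ interior (P ∪ Icc q m ×ˢ Icc c d) := by
    refine union_subset (interior_mono subset_union_left) (interior_maximal ?_ hE)
    rintro ⟨x, y⟩ ⟨hx, hy⟩
    rcases le_total x q with hxq | hqx
    · exact Or.inl (haP ⟨⟨hx.1.le, hxq⟩, Ioo_subset_Icc_self hy⟩)
    · exact Or.inr ⟨⟨hqx, hx.2.le⟩, Ioo_subset_Icc_self hy⟩
  have hinter : (interior P ∩ E).Nonempty := by
    obtain ⟨x, hax, hxq⟩ := exists_between haq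
    obtain ⟨y, hy⟩ := nonempty_Ioo.2 hcd
    have hsmall : Ioo a q ×ˢ Ioo c d ⊆ interior P := interior_maximal
      ((prod_mono Ioo_subset_Icc_self Ioo_subset_Icc_self).trans haP) (isOpen_Ioo.prod isOpen_Ioo)
    exact ⟨(x, y), hsmall ⟨⟨hax, hxq⟩, hy⟩, ⟨hax, hxq.trans hqm⟩, hy⟩
  refine (hP.union hinter ⟨hinter.mono inter_subset_right, isPreconnected_Ioo_prod_Ioo _ _ _ _⟩)
    |>.subset_closure hsub (interior_subset.trans (union_subset ?_ ?_))
  · exact hPcl.trans (closure_mono subset_union_left)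
  · rw [← closure_Ioo hqm.ne, ← closure_Ioo hcd.ne, ← closure_prod_eq]
    exact closure_mono ((prod_mono_left (Ioo_subset_Ioo_left haq.le)).trans subset_union_right)

theorem isConnected_compl_union (h : CanAttachRight P q m c d) (hqm : q ≤ m) (hcd : c ≤ d)
    (hP : IsClosed P) (hPc : IsPreconnected Pᶜ) :
    IsConnected (P ∪ Icc q m ×ˢ Icc c d)ᶜ := by
  obtain ⟨a, haq, haP⟩ := h.left
  obtain ⟨δ, hδ, hdisj⟩ := h.right
  set N : Set (ℝ × ℝ) := Ioo q (m + δ) ×ˢ Ioo (c - δ) (d + δ)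
  have hR : IsClosed (Icc q m ×ˢ Icc c d) := isClosed_Icc.prod isClosed_Icc
  have hNP : N ⊆ Pᶜ := hdisj.subset_compl_left
  have hunion : N ∪ (P ∪ Icc q m ×ˢ Icc c d)ᶜ = Pᶜ := by
    refine (union_subset hNP (compl_subset_compl.2 subset_union_left)).antisymm ?_
    rintro ⟨x, y⟩ hP
    refine (em ((x, y) ∈ Icc q m ×ˢ Icc c d)).imp (fun hxy => ?_) (not_or_intro hP)
    have hqx : q ≠ x := fun hqx => hP (haP ⟨⟨hqx ▸ haq.le, hqx.ge⟩, hxy.2⟩)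
    obtain ⟨⟨hqx', hxm⟩, hcy, hyd⟩ := hxy
    exact ⟨⟨hqx'.lt_of_ne hqx, hxm.trans_lt (lt_add_of_pos_right m hδ)⟩,
      (sub_lt_self c hδ).trans_le hcy, hyd.trans_lt (lt_add_of_pos_right d hδ)⟩
  have hinter : N ∩ (P ∪ Icc q m ×ˢ Icc c d)ᶜ = N \ Icc q m ×ˢ Icc c d := by
    rw [compl_union, ← inter_assoc, inter_eq_left.2 hNP, sdiff_eq]
  have hconn : IsPreconnected (N \ Icc q m ×ˢ Icc c d) :=
    isPreconnected_Ioo_prod_Ioo_sdiff hqm (by linarith) (by linarith) hcd (by linarith)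
  refine ⟨⟨(m + δ / 2, c), not_or_intro (hNP ?_) fun hmem => ?_⟩,
    isPreconnected_of_union_of_inter (isOpen_Ioo.prod isOpen_Ioo) (hP.union hR).isOpen_compl
      (hunion ▸ hPc) (hinter ▸ hconn)⟩
  · simp only [N, mem_prod, mem_Ioo]
    grind
  · exact absurd hmem.1.2 (by simpa using hδ)

theorem volume_union (h : CanAttachRight P q m c d) (hqm : q ≤ m) :
    volume (P ∪ Icc q m ×ˢ Icc c d) = volume P + ENNReal.ofReal ((m - q) * (d - c)) := by
  obtain ⟨δ, hδ, hdisj⟩ := h.right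
  have hsub : P ∩ Icc q m ×ˢ Icc c d ⊆ {q} ×ˢ univ := by
    rintro ⟨x, y⟩ ⟨hP, ⟨hqx, hxm⟩, hcy, hyd⟩
    refine ⟨hqx.antisymm' (not_lt.1 fun hlt => disjoint_left.1 hdisj hP ?_), mem_univ y⟩
    exact ⟨⟨hlt, by grind⟩, by grind, by grind⟩
  have hnull : AEDisjoint volume P (Icc q m ×ˢ Icc c d) := by
    refine measure_mono_null hsub ?_
    rw [Measure.volume_eq_prod, Measure.prod_prod, Real.volume_singleton, zero_mul]
  rw [measure_union₀ (measurableSet_Icc.prod measurableSet_Icc).nullMeasurableSet hnull,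
    volume_Icc_prod_Icc hqm]

end CanAttachRight

namespace CanAttachRight

variable {P : Set (ℝ × ℝ)} {q m c d : ℚ}

theorem isSimpleRatPolyomino_union (h : CanAttachRight P q m c d) (hqm : q < m) (hcd : c < d)
    (hP : IsSimpleRatPolyomino P) :
    IsSimpleRatPolyomino (P ∪ Icc (q : ℝ) m ×ˢ Icc (c : ℝ) d) :=
  ⟨hP.1.union_isRatRect ⟨q, m, c, d, hqm, hcd, rfl⟩,
    h.isConnected_interior_union (Rat.cast_lt.2 hqm) (Rat.cast_lt.2 hcd) hP.2.1
      hP.1.subset_closure_interior,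
    h.isConnected_compl_union (Rat.cast_le.2 hqm.le) (Rat.cast_le.2 hcd.le) hP.1.isClosed
      hP.2.2.isPreconnected⟩

theorem growsTo (h : CanAttachRight P q m c d) (hqm : q < m) (hcd : c < d)
    (hP : IsSimpleRatPolyomino P) : GrowsTo P (P ∪ Icc (q : ℝ) m ×ˢ Icc (c : ℝ) d) := by
  refine ⟨h.isSimpleRatPolyomino_union hqm hcd hP, subset_union_left, fun t hPt htQ => ?_⟩
  rcases hPt.eq_or_lt with hPt | hPt
  · exact ⟨P, hP, Subset.rfl, subset_union_left, hPt⟩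
  obtain ⟨v, hv, hPv⟩ := hP.1.exists_rat_volume_eq
  have hvt : v < t := by
    rw [hPv, ENNReal.ofReal_lt_ofReal_iff_of_nonneg (Rat.cast_nonneg.2 hv)] at hPt
    exact_mod_cast hPt
  have htv : t - v ≤ (m - q) * (d - c) := by
    have hR : 0 ≤ (m - q) * (d - c) := mul_nonneg (sub_nonneg.2 hqm.le) (sub_nonneg.2 hcd.le)
    rw [h.volume_union (Rat.cast_le.2 hqm.le), hPv, ← ENNReal.ofReal_add (by exact_mod_cast hv)
      (by exact_mod_cast hR), ENNReal.ofReal_le_ofReal_iff (by exact_mod_cast add_nonneg hv hR)]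
      at htQ
    exact sub_le_iff_le_add'.2 (by exact_mod_cast htQ)
  -- Cutting the rectangle at abscissa `s` leaves exactly the missing area.
  obtain ⟨s, hs⟩ : ∃ s : ℚ, (s - q) * (d - c) = t - v :=
    ⟨q + (t - v) / (d - c), by field_simp [(sub_pos.2 hcd).ne']; ring⟩
  have hqs : q < s :=
    sub_pos.1 (pos_of_mul_pos_left (hs ▸ sub_pos.2 hvt) (sub_pos.2 hcd).le)
  have hsm : s ≤ m :=
    sub_le_sub_iff_right q |>.1 (le_of_mul_le_mul_right (hs ▸ htv) (sub_pos.2 hcd))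
  have hs' := h.mono (Rat.cast_le.2 hsm)
  refine ⟨_, hs'.isSimpleRatPolyomino_union hqs hcd hP, subset_union_left,
    union_subset_union_right P (prod_mono_left (Icc_subset_Icc_right (Rat.cast_le.2 hsm))), ?_⟩
  have hs_real : ((s - q) * (d - c) : ℝ) = t - v := by exact_mod_cast hs
  rw [hs'.volume_union (Rat.cast_le.2 hqs.le), hs_real, hPv, ← ENNReal.ofReal_add
    (Rat.cast_nonneg.2 hv) (sub_nonneg.2 (Rat.cast_le.2 hvt.le)), add_sub_cancel]

end CanAttachRight

/-! ### Symmetries of the rational grid -/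

/-- An involutive, area-preserving homeomorphism of the plane sending rational rectangles to
rational rectangles. Such reflections turn statements about growing to the right into statements
about the other three directions; sets are transported by preimages. -/
structure IsGridSymmetry (σ : (ℝ × ℝ) ≃ₜ (ℝ × ℝ)) : Prop where
  involutive : Function.Involutive σ
  isRatRect_preimage : ∀ R, IsRatRect R → IsRatRect (σ ⁻¹' R)
  measurePreserving : MeasurePreserving σ

theorem preimage_prodComm_prod (s t : Set ℝ) : Homeomorph.prodComm ℝ ℝ ⁻¹' (s ×ˢ t) = t ×ˢ s :=
  preimage_swap_prod s t

theorem isGridSymmetry_prodComm : IsGridSymmetry (Homeomorph.prodComm ℝ ℝ) where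
  involutive _ := rfl
  isRatRect_preimage := by
    rintro _ ⟨a, b, c, d, hab, hcd, rfl⟩
    exact ⟨c, d, a, b, hcd, hab, preimage_prodComm_prod ..⟩
  measurePreserving := Measure.measurePreserving_swap

theorem isGridSymmetry_neg_prodCongr_refl :
    IsGridSymmetry ((Homeomorph.neg ℝ).prodCongr (Homeomorph.refl ℝ)) where
  involutive x := Prod.ext (neg_neg x.1) rfl
  isRatRect_preimage := by
    rintro _ ⟨a, b, c, d, hab, hcd, rfl⟩
    refine ⟨-b, -a, c, d, neg_lt_neg hab, hcd, ?_⟩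
    rw [Rat.cast_neg, Rat.cast_neg, ← neg_Icc]
    rfl
  measurePreserving := (Measure.measurePreserving_neg volume).prod (MeasurePreserving.id volume)

namespace IsGridSymmetry

variable {σ : (ℝ × ℝ) ≃ₜ (ℝ × ℝ)} {P Q : Set (ℝ × ℝ)}

theorem preimage_preimage (hσ : IsGridSymmetry σ) (S : Set (ℝ × ℝ)) : σ ⁻¹' (σ ⁻¹' S) = S :=
  hσ.involutive.preimage S

theorem volume_preimage (hσ : IsGridSymmetry σ) (S : Set (ℝ × ℝ)) :
    volume (σ ⁻¹' S) = volume S :=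
  MeasurePreserving.measure_preimage_equiv (f := σ.toMeasurableEquiv) hσ.measurePreserving S

theorem isSimpleRatPolyomino_preimage (hσ : IsGridSymmetry σ) (hP : IsSimpleRatPolyomino P) :
    IsSimpleRatPolyomino (σ ⁻¹' P) := by
  obtain ⟨⟨n, R, hR, rfl⟩, hint, hcompl⟩ := hP
  refine ⟨⟨n, fun i => σ ⁻¹' R i, fun i => hσ.isRatRect_preimage _ (hR i), preimage_iUnion⟩, ?_, ?_⟩
  · rwa [← σ.preimage_interior, σ.isConnected_preimage]
  · rwa [← preimage_compl, σ.isConnected_preimage]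

theorem growsTo_preimage (hσ : IsGridSymmetry σ) (h : GrowsTo P Q) :
    GrowsTo (σ ⁻¹' P) (σ ⁻¹' Q) := by
  refine ⟨hσ.isSimpleRatPolyomino_preimage h.isSimple, preimage_mono h.subset, fun t hPt htQ => ?_⟩
  rw [hσ.volume_preimage] at hPt htQ
  obtain ⟨C, hC, hPC, hCQ, hvol⟩ := h.exists_volume_eq t hPt htQ
  exact ⟨σ ⁻¹' C, hσ.isSimpleRatPolyomino_preimage hC, preimage_mono hPC, preimage_mono hCQ,
    (hσ.volume_preimage C).trans hvol⟩

theorem growsTo_of_preimage (hσ : IsGridSymmetry σ) (h : GrowsTo (σ ⁻¹' P) Q) :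
    GrowsTo P (σ ⁻¹' Q) :=
  hσ.preimage_preimage P ▸ hσ.growsTo_preimage h

end IsGridSymmetry

theorem growsTo_union_above {P : Set (ℝ × ℝ)} {l m c d : ℚ} (hP : IsSimpleRatPolyomino P)
    (hlm : l < m) (hcd : c < d) (hbelow : ∃ a < (c : ℝ), Icc (l : ℝ) m ×ˢ Icc a c ⊆ P)
    (habove : ∃ δ > 0, Disjoint P (Ioo (l - δ : ℝ) (m + δ) ×ˢ Ioo (c : ℝ) (d + δ))) :
    GrowsTo P (P ∪ Icc (l : ℝ) m ×ˢ Icc (c : ℝ) d) := by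
  have hσ := isGridSymmetry_prodComm
  obtain ⟨a, hac, haP⟩ := hbelow
  obtain ⟨δ, hδ, hdisj⟩ := habove
  have hattach : CanAttachRight (Homeomorph.prodComm ℝ ℝ ⁻¹' P) c d l m :=
    ⟨⟨a, hac, preimage_prodComm_prod .. ▸ preimage_mono haP⟩, δ, hδ,
      preimage_prodComm_prod .. ▸ hdisj.preimage _⟩
  have hgrow := hσ.growsTo_of_preimage
    (hattach.growsTo hcd hlm (hσ.isSimpleRatPolyomino_preimage hP))
  rwa [preimage_union, hσ.preimage_preimage, preimage_prodComm_prod] at hgrow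

/-! ### Tentacles -/

theorem mem_Icc_of_ordConnected {s : Set ℝ} (hs : s.OrdConnected) {a b x y : ℝ} (ha : a ∉ s)
    (hb : b ∉ s) (hx : x ∈ s) (hy : y ∈ s) (hxab : x ∈ Icc a b) : y ∈ Icc a b :=
  ⟨not_lt.1 fun hya => ha (hs.out hy hx ⟨hya.le, hxab.1⟩),
    not_lt.1 fun hby => hb (hs.out hx hy ⟨hxab.2, hby.le⟩)⟩

theorem exists_rat_Icc_subset_of_isOpen {J : Set ℝ} (hJ : IsOpen J) (hne : J.Nonempty) {F : Set ℝ}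
    (hF : F.Finite) : ∃ c d : ℚ, ∃ δ > 0, c < d ∧ Icc (c - δ : ℝ) (d + δ) ⊆ J \ F := by
  obtain ⟨y, hyJ, hyF⟩ := (hF.countable.dense_compl ℝ).inter_open_nonempty J hJ hne
  obtain ⟨r, hr, hball⟩ := isOpen_iff.1 (hJ.sdiff hF.isClosed) y ⟨hyJ, hyF⟩
  obtain ⟨c, hyc, hcy⟩ := exists_rat_btwn (show y - r / 2 < y by linarith)
  obtain ⟨d, hyd, hdy⟩ := exists_rat_btwn (show y < y + r / 2 by linarith)
  refine ⟨c, d, r / 2, half_pos hr, Rat.cast_lt.1 (hcy.trans hyd), Subset.trans ?_ hball⟩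
  rw [Real.ball_eq_Ioo]
  exact Icc_subset_Ioo (by linarith) (by linarith)

theorem IsRatPolyomino.exists_rat_Icc_slice_eq {P : Set (ℝ × ℝ)} (hP : IsRatPolyomino P)
    {J : Set ℝ} (hJ : IsOpen J) (hne : J.Nonempty) :
    ∃ c d : ℚ, ∃ δ > 0, c < d ∧ Icc (c - δ : ℝ) (d + δ) ⊆ J ∧
      ∀ y ∈ Icc (c - δ : ℝ) (d + δ), ∀ x, (x, y) ∈ P ↔ (x, (c : ℝ)) ∈ P := by
  obtain ⟨n, R, hR, rfl⟩ := hP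
  choose a b c d _ _ hR using hR
  obtain rfl := funext hR
  -- Slices of `P` only change at the finitely many corner ordinates.
  obtain ⟨c₀, d₀, δ, hδ, hlt, hsub⟩ := exists_rat_Icc_subset_of_isOpen hJ hne
    ((finite_range fun i => (c i : ℝ)).union (finite_range fun i => (d i : ℝ)))
  have hc₀ : (c₀ : ℝ) ∈ Icc (c₀ - δ : ℝ) (d₀ + δ) :=
    ⟨by linarith, by linarith [(Rat.cast_lt (K := ℝ)).2 hlt]⟩
  refine ⟨c₀, d₀, δ, hδ, hlt, hsub.trans sdiff_subset, fun y hy x => ?_⟩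
  simp only [mem_iUnion, mem_prod]
  have hc (i : Fin n) : (c i : ℝ) ∉ Icc (c₀ - δ : ℝ) (d₀ + δ) :=
    fun hi => (hsub hi).2 (Or.inl (mem_range_self i))
  have hd (i : Fin n) : (d i : ℝ) ∉ Icc (c₀ - δ : ℝ) (d₀ + δ) :=
    fun hi => (hsub hi).2 (Or.inr (mem_range_self i))
  exact exists_congr fun i => and_congr_right fun _ =>
    ⟨mem_Icc_of_ordConnected ordConnected_Icc (hc i) (hd i) hy hc₀,
      mem_Icc_of_ordConnected ordConnected_Icc (hc i) (hd i) hc₀ hy⟩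

theorem exists_rat_disjoint_Ioo_of_isClosed {X : Set ℝ} (hX : IsClosed X)
    (hXrat : ∀ x ∈ X, ∃ a b : ℚ, a < b ∧ x ∈ Icc (a : ℝ) b ∧ Icc (a : ℝ) b ⊆ X)
    {x₀ m : ℝ} (hx₀ : x₀ ∈ X) (hx₀m : x₀ ≤ m) (hm : m ∉ X) :
    ∃ q : ℚ, x₀ ≤ q ∧ q < m ∧ (∃ a < (q : ℝ), Icc a q ⊆ X) ∧
      ∃ δ > 0, Disjoint X (Ioo (q : ℝ) (m + δ)) := by
  obtain ⟨x, ⟨hxX, hx₀x, hxm⟩, hmax⟩ :=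
    (isCompact_Icc.inter_left hX).exists_isGreatest ⟨x₀, hx₀, left_mem_Icc.2 hx₀m⟩
  obtain ⟨a, q, haq, ⟨hax, hxq⟩, hsub⟩ := hXrat x hxX
  have hxm : x < m := hxm.lt_of_ne fun h => hm (h ▸ hxX)
  obtain rfl : x = q := by
    refine hxq.antisymm (not_lt.1 fun hlt => ?_)
    obtain ⟨z, hxz, hz⟩ := exists_between (lt_min hlt hxm)
    obtain ⟨hzq, hzm⟩ := lt_min_iff.1 hz
    exact hxz.not_ge (hmax ⟨hsub ⟨hax.trans hxz.le, hzq.le⟩, hx₀x.trans hxz.le, hzm.le⟩)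
  obtain ⟨δ, hδ, hball⟩ := isOpen_iff.1 hX.isOpen_compl m hm
  rw [Real.ball_eq_Ioo] at hball
  refine ⟨q, hx₀x, hxm, ⟨a, Rat.cast_lt.2 haq, hsub⟩, δ, hδ, ?_⟩
  refine disjoint_left.2 fun z hzX ⟨hqz, hzm⟩ => ?_
  rcases le_or_gt z m with hle | hgt
  · exact hqz.not_ge (hmax ⟨hzX, hx₀x.trans hqz.le, hle⟩)
  · exact hball ⟨by linarith, hzm⟩ hzX

theorem IsRatPolyomino.exists_canAttachRight {P : Set (ℝ × ℝ)} (hP : IsRatPolyomino P)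
    {p : ℝ × ℝ} (hp : p ∈ interior P) {m : ℚ} (hpm : p.1 ≤ m) {J : Set ℝ} (hJ : IsOpen J)
    (hpJ : p.2 ∈ J) :
    (∃ y ∈ J, ((m : ℝ), y) ∈ P) ∨ ∃ q c d : ℚ, p.1 ≤ q ∧ q < m ∧ c < d ∧
      Icc (c : ℝ) d ⊆ J ∧ CanAttachRight P q m c d := by
  obtain ⟨c, d, δ, hδ, hcd, hsub, hslice⟩ := hP.exists_rat_Icc_slice_eq
    (hJ.inter (isOpen_interior.preimage (Continuous.prodMk_right p.1))) ⟨p.2, hpJ, hp⟩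
  have hcd_real : (c : ℝ) < d := Rat.cast_lt.2 hcd
  have hIcc : Icc (c : ℝ) d ⊆ Icc (c - δ : ℝ) (d + δ) := Icc_subset_Icc (by linarith) (by linarith)
  obtain ⟨hcJ, hpc⟩ := hsub (hIcc (left_mem_Icc.2 hcd_real.le))
  by_cases hm : ((m : ℝ), (c : ℝ)) ∈ P
  · exact Or.inl ⟨c, hcJ, hm⟩
  have hrat : ∀ x ∈ {x : ℝ | (x, (c : ℝ)) ∈ P}, ∃ a b : ℚ, a < b ∧ x ∈ Icc (a : ℝ) b ∧
      Icc (a : ℝ) b ⊆ {x : ℝ | (x, (c : ℝ)) ∈ P} := by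
    obtain ⟨n, R, hR, rfl⟩ := hP
    intro x hx
    obtain ⟨i, hi⟩ := mem_iUnion.1 hx
    obtain ⟨a, b, _, _, hab, -, hRi⟩ := hR i
    rw [hRi] at hi
    exact ⟨a, b, hab, hi.1, fun z hz => mem_iUnion.2 ⟨i, hRi ▸ ⟨hz, hi.2⟩⟩⟩
  obtain ⟨q, hpq, hqm, ⟨a, haq, haX⟩, ε, hε, hdisj⟩ := exists_rat_disjoint_Ioo_of_isClosed
    (hP.isClosed.preimage (Continuous.prodMk_left (c : ℝ))) hrat
    (show (p.1, (c : ℝ)) ∈ P from interior_subset hpc) hpm hm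
  refine Or.inr ⟨q, c, d, hpq, Rat.cast_lt.1 hqm, hcd, fun y hy => (hsub (hIcc hy)).1,
    ⟨a, haq, fun z hz => (hslice _ (hIcc hz.2) _).2 (haX hz.1)⟩,
    min δ ε, lt_min hδ hε, disjoint_left.2 fun z hzP hz => ?_⟩
  have hz₂ : z.2 ∈ Icc (c - δ : ℝ) (d + δ) := ⟨by grind, by grind⟩
  exact disjoint_left.1 hdisj ((hslice _ hz₂ _).1 hzP)
    ⟨hz.1.1, hz.1.2.trans_le (by gcongr; exact min_le_right ..)⟩

namespace IsSimpleRatPolyomino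

variable {P : Set (ℝ × ℝ)} {I J : Set ℝ}

theorem exists_growsTo_right (hP : IsSimpleRatPolyomino P) (hI : I.OrdConnected) (hJ : IsOpen J)
    {p : ℝ × ℝ} (hp : p ∈ interior P ∩ I ×ˢ J) {m : ℚ} (hm : (m : ℝ) ∈ I) (hpm : p.1 ≤ m) :
    ∃ P', GrowsTo P P' ∧ P' ⊆ P ∪ I ×ˢ J ∧ ∃ y ∈ J, ((m : ℝ), y) ∈ P' := by
  obtain ⟨hpP, hpI, hpJ⟩ := hp
  rcases hP.1.exists_canAttachRight hpP hpm hJ hpJ with hmP | ⟨q, c, d, hpq, hqm, hcd, hsub, h⟩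
  · exact ⟨P, .refl hP, subset_union_left, hmP⟩
  have hcd_real : (c : ℝ) ≤ d := Rat.cast_le.2 hcd.le
  exact ⟨_, h.growsTo hqm hcd hP,
    union_subset_union_right P (prod_mono ((Icc_subset_Icc_left hpq).trans (hI.out hpI hm)) hsub),
    c, hsub (left_mem_Icc.2 hcd_real),
    Or.inr ⟨right_mem_Icc.2 (Rat.cast_le.2 hqm.le), left_mem_Icc.2 hcd_real⟩⟩

theorem exists_growsTo_left (hP : IsSimpleRatPolyomino P) (hI : I.OrdConnected) (hJ : IsOpen J)
    {p : ℝ × ℝ} (hp : p ∈ interior P ∩ I ×ˢ J) {m : ℚ} (hm : (m : ℝ) ∈ I) (hmp : m ≤ p.1) :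
    ∃ P', GrowsTo P P' ∧ P' ⊆ P ∪ I ×ˢ J ∧ ∃ y ∈ J, ((m : ℝ), y) ∈ P' := by
  have hσ := isGridSymmetry_neg_prodCongr_refl
  set σ := (Homeomorph.neg ℝ).prodCongr (Homeomorph.refl ℝ)
  have hI' : (Neg.neg ⁻¹' I).OrdConnected := hI.preimage_anti fun _ _ => neg_le_neg
  have hbox : σ ⁻¹' (I ×ˢ J) = (Neg.neg ⁻¹' I) ×ˢ J := rfl
  have hp' : σ p ∈ interior (σ ⁻¹' P) ∩ σ ⁻¹' (I ×ˢ J) := by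
    rwa [← σ.preimage_interior, ← preimage_inter, mem_preimage, hσ.involutive]
  obtain ⟨P', hgrow, hsub, y, hy, hmy⟩ :=
    (hσ.isSimpleRatPolyomino_preimage hP).exists_growsTo_right hI' hJ (hbox ▸ hp') (m := -m)
      (by simpa using hm) ((neg_le_neg hmp).trans_eq (Rat.cast_neg m).symm)
  refine ⟨σ ⁻¹' P', hσ.growsTo_of_preimage hgrow, ?_, y, hy, ?_⟩
  · rw [← hσ.preimage_preimage (P ∪ I ×ˢ J)]
    exact preimage_mono hsub
  · rwa [Rat.cast_neg] at hmy

theorem exists_growsTo_horizontal (hP : IsSimpleRatPolyomino P) (hI : I.OrdConnected)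
    (hIo : IsOpen I) (hJ : IsOpen J) (hne : (P ∩ I ×ˢ J).Nonempty) {m : ℚ} (hm : (m : ℝ) ∈ I) :
    ∃ P', GrowsTo P P' ∧ P' ⊆ P ∪ I ×ˢ J ∧ ∃ y ∈ J, ((m : ℝ), y) ∈ P' := by
  obtain ⟨x, hxP, hxIJ⟩ := hne
  obtain ⟨p, hpIJ, hpP⟩ :=
    mem_closure_iff.1 (hP.1.subset_closure_interior hxP) _ (hIo.prod hJ) hxIJ
  rcases le_total p.1 m with hpm | hmp
  · exact hP.exists_growsTo_right hI hJ ⟨hpP, hpIJ⟩ hm hpm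
  · exact hP.exists_growsTo_left hI hJ ⟨hpP, hpIJ⟩ hm hmp

theorem exists_growsTo_vertical (hP : IsSimpleRatPolyomino P) (hI : IsOpen I)
    (hJ : J.OrdConnected) (hJo : IsOpen J) (hne : (P ∩ I ×ˢ J).Nonempty) {m : ℚ}
    (hm : (m : ℝ) ∈ J) :
    ∃ P', GrowsTo P P' ∧ P' ⊆ P ∪ I ×ˢ J ∧ ∃ x ∈ I, (x, (m : ℝ)) ∈ P' := by
  have hσ := isGridSymmetry_prodComm
  set σ := Homeomorph.prodComm ℝ ℝ
  have hbox : σ ⁻¹' (I ×ˢ J) = J ×ˢ I := preimage_prodComm_prod I J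
  have hne' : (σ ⁻¹' P ∩ J ×ˢ I).Nonempty := hbox ▸ hne.preimage σ.surjective
  obtain ⟨P', hgrow, hsub, hmeet⟩ :=
    (hσ.isSimpleRatPolyomino_preimage hP).exists_growsTo_horizontal hJ hJo hI hne' hm
  refine ⟨σ ⁻¹' P', hσ.growsTo_of_preimage hgrow, ?_, hmeet⟩
  rw [← hσ.preimage_preimage (P ∪ I ×ˢ J), preimage_union, hbox]
  exact preimage_mono hsub

theorem exists_growsTo_inter_nonempty_of_prod (hP : IsSimpleRatPolyomino P) (hI : I.OrdConnected)
    (hIo : IsOpen I) (hJ : J.OrdConnected) (hJo : IsOpen J) (hne : (P ∩ I ×ˢ J).Nonempty)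
    {W : Set (ℝ × ℝ)} (hW : IsOpen W) (hWne : (W ∩ I ×ˢ J).Nonempty) :
    ∃ P', GrowsTo P P' ∧ P' ⊆ P ∪ I ×ˢ J ∧ (P' ∩ W).Nonempty := by
  obtain ⟨w, hw⟩ := hWne
  obtain ⟨u, v, hu, hv, hwu, hwv, huv⟩ :=
    isOpen_prod_iff.1 (hW.inter (hIo.prod hJo)) w.1 w.2 hw
  obtain ⟨m, hm⟩ := Rat.denseRange_cast.exists_mem_open hu ⟨w.1, hwu⟩
  obtain ⟨n, hn⟩ := Rat.denseRange_cast.exists_mem_open hv ⟨w.2, hwv⟩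
  have huI : u ⊆ I := fun x hx => (huv (mk_mem_prod hx hwv)).2.1
  have hvJ : v ⊆ J := fun y hy => (huv (mk_mem_prod hwu hy)).2.2
  obtain ⟨P₁, hgrow₁, hsub₁, y, hy, hmy⟩ := hP.exists_growsTo_horizontal hI hIo hJo hne (huI hm)
  obtain ⟨P₂, hgrow₂, hsub₂, x, hx, hxn⟩ :=
    hgrow₁.isSimple.exists_growsTo_vertical hu hJ hJo ⟨_, hmy, hm, hy⟩ (hvJ hn)
  exact ⟨P₂, hgrow₁.trans hgrow₂, hsub₂.trans (union_subset hsub₁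
    ((prod_mono_left huI).trans subset_union_right)), _, hxn, (huv ⟨hx, hn⟩).1⟩

theorem exists_growsTo_inter_nonempty (hP : IsSimpleRatPolyomino P) {U W : Set (ℝ × ℝ)}
    (hU : IsOpen U) (hUc : IsPreconnected U) (hPU : P ⊆ U) (hW : IsOpen W)
    (hWU : (W ∩ U).Nonempty) : ∃ P', GrowsTo P P' ∧ P' ⊆ U ∧ (P' ∩ W).Nonempty := by
  set Z : Set (ℝ × ℝ) := ⋃₀ {Q | GrowsTo P Q ∧ Q ⊆ U}
  have hlocal : closure Z ∩ U ⊆ interior (closure Z) := by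
    rintro x ⟨hxZ, hxU⟩
    obtain ⟨r, hr, hball⟩ := isOpen_iff.1 hU x hxU
    refine interior_maximal (fun w hw => mem_closure_iff.2 fun O hO hwO => ?_) isOpen_ball
      (mem_ball_self hr)
    obtain ⟨z, hz, Q, ⟨hPQ, hQU⟩, hzQ⟩ := mem_closure_iff.1 hxZ _ isOpen_ball (mem_ball_self hr)
    rw [← ball_prod_same] at hball hz hw
    obtain ⟨P', hgrow, hsub, y, hyP', hyO⟩ := hPQ.isSimple.exists_growsTo_inter_nonempty_of_prod
      (convex_ball x.1 r).ordConnected isOpen_ball (convex_ball x.2 r).ordConnected isOpen_ball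
      ⟨z, hzQ, hz⟩ hO ⟨w, hwO, hw⟩
    exact ⟨y, hyO, P', ⟨hPQ.trans hgrow, hsub.trans (union_subset hQU hball)⟩, hyP'⟩
  have hPZ : P ⊆ Z := subset_sUnion_of_mem ⟨.refl hP, hPU⟩
  obtain ⟨p, hp⟩ := hP.2.1.nonempty.mono interior_subset
  have hdense : U ⊆ interior (closure Z) :=
    hUc.subset_of_closure_inter_subset isOpen_interior
      ⟨p, hPU hp, hlocal ⟨subset_closure (hPZ hp), hPU hp⟩⟩ ((inter_subset_inter_left U
        (closure_minimal interior_subset isClosed_closure)).trans hlocal)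
  obtain ⟨w, hwW, hwU⟩ := hWU
  obtain ⟨y, hyW, P', ⟨hgrow, hsub⟩, hyP'⟩ :=
    mem_closure_iff.1 (interior_subset (hdense hwU)) W hW hwW
  exact ⟨P', hgrow, hsub, y, hyP', hyW⟩

end IsSimpleRatPolyomino

/-! ### Absorbing rectangles -/

namespace IsSimpleRatPolyomino

variable {U P : Set (ℝ × ℝ)}

theorem exists_growsTo_canAttachRight (hP : IsSimpleRatPolyomino P) (hU : IsOpen U)
    (hUc : IsPreconnected U) (hPU : P ⊆ U) {l b c d : ℝ} {m : ℚ} (hlm : l ≤ m) (hbc : b < c)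
    (hcd : c ≤ d) (hEU : Icc l m ×ˢ Icc b d ⊆ U) (hPE : Disjoint P (Icc l m ×ˢ Icc b d)) :
    ∃ P', GrowsTo P P' ∧ P' ⊆ U \ Icc l m ×ˢ Icc b d ∧ ∃ q c' d' : ℚ, q < l ∧ c' < d' ∧
      Icc (c' : ℝ) d' ⊆ Ioo b c ∧ Icc (q : ℝ) m ×ˢ Icc (c' : ℝ) d' ⊆ U ∧
        CanAttachRight P' q m c' d' := by
  set E : Set (ℝ × ℝ) := Icc l m ×ˢ Icc b d
  have hE : IsClosed E := isClosed_Icc.prod isClosed_Icc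
  have hUE : IsPreconnected (U \ E) :=
    isPreconnected_sdiff hU hUc hE (isConnected_compl_Icc_prod_Icc ..).isPreconnected hEU
  obtain ⟨δ, hδ, hbox⟩ := exists_Icc_prod_Icc_subset_of_isOpen hU hlm (hbc.le.trans hcd) hEU
  set W : Set (ℝ × ℝ) := Ioo (l - δ) l ×ˢ Ioo b c
  have hW : IsOpen W := isOpen_Ioo.prod isOpen_Ioo
  have hWne : W.Nonempty := (nonempty_Ioo.2 (sub_lt_self l hδ)).prod (nonempty_Ioo.2 hbc)
  have hWU : W ⊆ U \ E := fun z ⟨hz₁, hz₂⟩ =>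
    ⟨hbox ⟨⟨hz₁.1.le, by linarith [hz₁.2]⟩, by linarith [hz₂.1], by linarith [hz₂.2]⟩,
      fun hzE => hz₁.2.not_ge hzE.1.1⟩
  obtain ⟨P', hgrow, hsub, z, hzP, hzW⟩ := hP.exists_growsTo_inter_nonempty (hU.sdiff hE) hUE
    (subset_sdiff.2 ⟨hPU, hPE⟩) hW (hWne.mono (subset_inter Subset.rfl hWU))
  obtain ⟨p, ⟨hpW₁, hpW₂⟩, hpP⟩ :=
    mem_closure_iff.1 (hgrow.isSimple.1.subset_closure_interior hzP) W hW hzW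
  obtain ⟨y, hy, hmy⟩ | ⟨q, c', d', hpq, hqm, hcd', hJ, h⟩ :=
    hgrow.isSimple.1.exists_canAttachRight hpP (hpW₁.2.le.trans hlm) isOpen_Ioo hpW₂
  · exact ((hsub hmy).2 ⟨right_mem_Icc.2 hlm, hy.1.le, hy.2.le.trans hcd⟩).elim
  have hc' := hJ (left_mem_Icc.2 (Rat.cast_le.2 hcd'.le))
  have hql : (q : ℝ) < l := by
    obtain ⟨a, haq, haP⟩ := h.left
    have hqP : ((q : ℝ), (c' : ℝ)) ∈ P' :=
      haP ⟨right_mem_Icc.2 haq.le, left_mem_Icc.2 (Rat.cast_le.2 hcd'.le)⟩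
    exact not_le.1 fun hlq =>
      (hsub hqP).2 ⟨⟨hlq, Rat.cast_le.2 hqm.le⟩, hc'.1.le, hc'.2.le.trans hcd⟩
  refine ⟨P', hgrow, hsub, q, c', d', hql, hcd', hJ, Subset.trans (prod_mono ?_ ?_) hbox, h⟩
  · exact Icc_subset_Icc (hpW₁.1.le.trans hpq) (le_add_of_nonneg_right hδ.le)
  · exact hJ.trans (Ioo_subset_Icc_self.trans (Icc_subset_Icc (by linarith) (by linarith)))

theorem exists_growsTo_superset_isRatRect (hP : IsSimpleRatPolyomino P) (hU : IsOpen U)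
    (hUc : IsPreconnected U) (hPU : P ⊆ U) {Q : Set (ℝ × ℝ)} (hQ : IsRatRect Q) (hQU : Q ⊆ U)
    (hPQ : Disjoint P Q) : ∃ P', GrowsTo P P' ∧ P' ⊆ U ∧ Q ⊆ P' := by
  obtain ⟨l, m, c, d, hlm, hcd, rfl⟩ := hQ
  have hlm_real : (l : ℝ) < m := Rat.cast_lt.2 hlm
  have hcd_real : (c : ℝ) < d := Rat.cast_lt.2 hcd
  obtain ⟨δ, hδ, hbox⟩ := exists_Icc_prod_Icc_subset_of_isOpen (hU.sdiff hP.1.isClosed)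
    hlm_real.le hcd_real.le (subset_sdiff.2 ⟨hQU, hPQ.symm⟩)
  obtain ⟨b, hδb, hbc⟩ := exists_rat_btwn (sub_lt_self (c : ℝ) hδ)
  have hE : Icc (l : ℝ) m ×ˢ Icc (b : ℝ) d ⊆ U \ P := (prod_mono (Icc_subset_Icc (by linarith)
    (by linarith)) (Icc_subset_Icc hδb.le (by linarith))).trans hbox
  -- A corridor crosses the strip below `Q`; the column above it then covers `Q`.
  obtain ⟨P₁, hgrow₁, hsub₁, q, c', d', hql, hcd', hJ, hU₂, h⟩ :=
    hP.exists_growsTo_canAttachRight hU hUc hPU hlm_real.le hbc hcd_real.le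
      (hE.trans sdiff_subset) (subset_sdiff.1 hE).2.symm
  have hd'c : d' < c := Rat.cast_lt.1 (hJ (right_mem_Icc.2 (Rat.cast_le.2 hcd'.le))).2
  have hbd' : (b : ℝ) < d' := (hJ (right_mem_Icc.2 (Rat.cast_le.2 hcd'.le))).1
  obtain ⟨ε, hε, hbox₁⟩ := exists_Icc_prod_Icc_subset_of_isOpen
    hgrow₁.isSimple.1.isClosed.isOpen_compl hlm_real.le (hbc.trans hcd_real).le
    (fun z hzE hzP => (hsub₁ hzP).2 hzE)
  have hgrow₂ := h.growsTo (Rat.cast_lt.1 (hql.trans hlm_real)) hcd' hgrow₁.isSimple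
  have hgrow₃ := growsTo_union_above hgrow₂.isSimple hlm (hd'c.trans hcd)
    ⟨c', Rat.cast_lt.2 hcd', subset_union_of_subset_right (prod_mono_left
      (Icc_subset_Icc_left hql.le)) P₁⟩ ⟨ε, hε, disjoint_left.2 ?_⟩
  · refine ⟨_, (hgrow₁.trans hgrow₂).trans hgrow₃,
      union_subset (union_subset (hsub₁.trans sdiff_subset) hU₂) ?_,
      subset_union_of_subset_right
        (prod_mono_right (Icc_subset_Icc_left (Rat.cast_le.2 hd'c.le))) _⟩
    exact (prod_mono_right (Icc_subset_Icc_left hbd'.le)).trans (hE.trans sdiff_subset)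
  · rintro z (hzP | hzR) ⟨hz₁, hz₂⟩
    · exact hbox₁ ⟨Ioo_subset_Icc_self hz₁, by linarith [hz₂.1], hz₂.2.le⟩ hzP
    · exact hz₂.1.not_ge hzR.2.2

theorem exists_growsTo_superset_biUnion {ι : Type*} (hU : IsOpen U) (hUc : IsPreconnected U)
    {Q : ι → Set (ℝ × ℝ)} {s : Finset ι} (hQ : ∀ i ∈ s, IsRatRect (Q i)) (hQU : ∀ i ∈ s, Q i ⊆ U)
    (hQQ : (s : Set ι).PairwiseDisjoint Q) (hP : IsSimpleRatPolyomino P) (hPU : P ⊆ U)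
    (hPQ : ∀ i ∈ s, Disjoint P (Q i)) :
    ∃ P', GrowsTo P P' ∧ P' ⊆ U ∧ ⋃ i ∈ s, Q i ⊆ P' := by
  induction s using Finset.cons_induction generalizing P with
  | empty => exact ⟨P, .refl hP, hPU, by simp⟩
  | cons a s ha ih =>
    simp only [Finset.forall_mem_cons] at hQ hQU hPQ
    rw [Finset.coe_cons, pairwiseDisjoint_insert_of_notMem (Finset.mem_coe.not.2 ha)] at hQQ
    obtain ⟨hQQ, haQ⟩ := hQQ
    have hopen : IsOpen (U \ ⋃ i ∈ s, Q i) :=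
      hU.sdiff (s.finite_toSet.isClosed_biUnion fun i hi => (hQ.2 i hi).isClosed)
    have hconn : IsPreconnected (U \ ⋃ i ∈ s, Q i) :=
      isPreconnected_sdiff_biUnion hU hUc (fun i hi => (hQ.2 i hi).isClosed)
        (fun i hi => (hQ.2 i hi).isSimpleRatPolyomino.2.2.isPreconnected) hQU.2 hQQ
    obtain ⟨P₁, hgrow₁, hsub₁, haP₁⟩ := hP.exists_growsTo_superset_isRatRect hopen hconn
      (subset_sdiff.2 ⟨hPU, disjoint_iUnion₂_right.2 hPQ.2⟩) hQ.1
      (subset_sdiff.2 ⟨hQU.1, disjoint_iUnion₂_right.2 haQ⟩) hPQ.1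
    obtain ⟨hP₁U, hP₁Q⟩ := subset_sdiff.1 hsub₁
    obtain ⟨P₂, hgrow₂, hP₂U, hsP₂⟩ :=
      ih hQ.2 hQU.2 hQQ hgrow₁.isSimple hP₁U (disjoint_iUnion₂_right.1 hP₁Q)
    refine ⟨P₂, hgrow₁.trans hgrow₂, hP₂U, ?_⟩
    classical
    rw [Finset.cons_eq_insert, Finset.set_biUnion_insert]
    exact union_subset (haP₁.trans hgrow₂.subset) hsP₂

end IsSimpleRatPolyomino

theorem volume_closedBall_three_mul_le {R : Set (ℝ × ℝ)} {x : ℝ × ℝ} {r : ℝ}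
    (hR : closedBall x (r / 2) ⊆ R) : volume (closedBall x (3 * r)) ≤ 36 * volume R :=
  calc volume (closedBall x (3 * r)) = volume (closedBall x (6 * (r / 2))) := by ring_nf
    _ = 36 * volume (closedBall x (r / 2)) := by
      rw [Measure.addHaar_closedBall_mul_of_pos volume x (by norm_num) (r / 2),
        Measure.addHaar_closedBall_center volume x, Module.finrank_prod, Module.finrank_self]
      norm_num
    _ ≤ 36 * volume R := by gcongr

theorem exists_isRatRect_pairwiseDisjoint_lt_volume {O : Set (ℝ × ℝ)} (hO : IsOpen O) {t : ENNReal}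
    (ht : t < volume O) :
    ∃ 𝒬 : Finset (Set (ℝ × ℝ)), (∀ Q ∈ 𝒬, IsRatRect Q) ∧ (∀ Q ∈ 𝒬, Q ⊆ O) ∧
      (𝒬 : Set (Set (ℝ × ℝ))).PairwiseDisjoint id ∧ t < volume (⋃ Q ∈ 𝒬, Q) := by
  choose! R hR hsubset hsuperset using fun a : (ℝ × ℝ) × ℝ =>
    exists_isRatRect_between_balls a.1 (r := a.2)
  obtain ⟨u, huT, hcount, hdisj, hnull⟩ := Vitali.exists_disjoint_covering_ae volume O
    {a : (ℝ × ℝ) × ℝ | 0 < a.2 ∧ ball a.1 a.2 ⊆ O} 36 Prod.snd Prod.fst R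
    (fun a ha => (hsuperset a ha.1).trans ball_subset_closedBall)
    (fun a ha => volume_closedBall_three_mul_le (hsubset a ha.1))
    (fun a ha => (hR a ha.1).nonempty_interior) (fun a ha => (hR a ha.1).isClosed)
    (fun x hx ε hε => by
      obtain ⟨r, hr, hball⟩ := isOpen_iff.1 hO x hx
      exact ⟨(x, min ε r), ⟨lt_min hε hr, (ball_subset_ball (min_le_right ..)).trans hball⟩,
        min_le_left .., rfl⟩)
  have hRu (a) (ha : a ∈ u) : IsRatRect (R a) := hR a (huT ha).1
  have hlt : t < volume (⋃ a ∈ u, R a) :=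
    ht.trans_le (measure_mono_ae (ae_le_set.2 hnull))
  rw [measure_biUnion hcount hdisj fun a ha => (hRu a ha).isClosed.measurableSet,
    ENNReal.tsum_eq_iSup_sum, lt_iSup_iff] at hlt
  obtain ⟨s, hs⟩ := hlt
  classical
  have hsdisj : (s : Set u).PairwiseDisjoint fun a : u => R a := fun a _ b _ hab =>
    hdisj a.2 b.2 (Subtype.coe_ne_coe.2 hab)
  refine ⟨s.image fun a : u => R a, ?_, ?_, ?_, ?_⟩
  · exact Finset.forall_mem_image.2 fun a _ => hRu a a.2
  · exact Finset.forall_mem_image.2 fun a _ =>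
      (hsuperset a (huT a.2).1).trans (huT a.2).2
  · rw [Finset.coe_image]
    rintro _ ⟨a, ha, rfl⟩ _ ⟨b, hb, rfl⟩ hab
    exact hsdisj ha hb fun h => hab (congrArg (fun a : u => R a) h)
  · rwa [Finset.set_biUnion_finset_image,
      measure_biUnion_finset hsdisj fun a _ => (hRu a a.2).isClosed.measurableSet]

theorem IsSimpleRatPolyomino.exists_superset_volume_eq {U B : Set (ℝ × ℝ)}
    (hB : IsSimpleRatPolyomino B) (hU : IsOpen U) (hUc : IsPreconnected U) (hBU : B ⊆ U) {ρ : ℚ}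
    (hBρ : volume B < ENNReal.ofReal ρ) (hρU : ENNReal.ofReal ρ < volume U) :
    ∃ C, IsSimpleRatPolyomino C ∧ volume C = ENNReal.ofReal ρ ∧ B ⊆ C ∧ C ⊆ U := by
  have hgap : ENNReal.ofReal ρ - volume B < volume (U \ B) :=
    ((ENNReal.cancel_of_ne hB.1.volume_ne_top).tsub_lt_tsub_right_of_le hBρ.le hρU).trans_le
      le_measure_sdiff
  obtain ⟨𝒬, hrect, hsub, hdisj, hvol⟩ :=
    exists_isRatRect_pairwiseDisjoint_lt_volume (hU.sdiff hB.1.isClosed) hgap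
  obtain ⟨P, hgrow, hPU, hP⟩ := exists_growsTo_superset_biUnion hU hUc hrect
    (fun Q hQ => (hsub Q hQ).trans sdiff_subset) hdisj hB hBU
    (fun Q hQ => (subset_sdiff.1 (hsub Q hQ)).2.symm)
  have hρP : ENNReal.ofReal ρ ≤ volume P :=
    calc ENNReal.ofReal ρ ≤ volume B + (ENNReal.ofReal ρ - volume B) := le_add_tsub
      _ ≤ volume B + volume (⋃ Q ∈ 𝒬, Q) := by gcongr
      _ = volume (B ∪ ⋃ Q ∈ 𝒬, Q) := (measure_union (disjoint_iUnion₂_right.2 fun Q hQ =>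
          (subset_sdiff.1 (hsub Q hQ)).2.symm) (𝒬.measurableSet_biUnion fun Q hQ =>
            (hrect Q hQ).isClosed.measurableSet)).symm
      _ ≤ volume P := measure_mono (union_subset hgrow.subset hP)
  obtain ⟨C, hC, hBC, hCP, hCρ⟩ := hgrow.exists_volume_eq ρ hBρ.le hρP
  exact ⟨C, hC, hCρ, hBC, hCP.trans hPU⟩

theorem exists_isSimpleRatPolyomino_mem_volume_lt {U : Set (ℝ × ℝ)} (hU : IsOpen U) {x : ℝ × ℝ}
    (hx : x ∈ U) {t : ENNReal} (ht : 0 < t) :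
    ∃ P, IsSimpleRatPolyomino P ∧ x ∈ P ∧ P ⊆ U ∧ volume P < t := by
  obtain ⟨V, hxV, hV, hVt⟩ := exists_isOpen_lt_of_lt (μ := volume) {x} t (by simpa using ht)
  obtain ⟨r, hr, hball⟩ := isOpen_iff.1 (hU.inter hV) x ⟨hx, hxV rfl⟩
  obtain ⟨R, hR, hxR, hRball⟩ := exists_isRatRect_between_balls x hr
  have hRUV : R ⊆ U ∩ V := hRball.trans hball
  exact ⟨R, hR.isSimpleRatPolyomino, hxR (mem_closedBall_self (half_pos hr).le),
    hRUV.trans inter_subset_left, (measure_mono (hRUV.trans inter_subset_right)).trans_lt hVt⟩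

theorem isClosed_of_isSimpleRatPolyomino_or_singleton {D : Set (ℝ × ℝ)}
    (hD : IsSimpleRatPolyomino D ∨ ∃ x, D = {x}) : IsClosed D := by
  obtain hD | ⟨x, rfl⟩ := hD
  exacts [hD.1.isClosed, isClosed_singleton]

theorem isConnected_compl_of_isSimpleRatPolyomino_or_singleton {D : Set (ℝ × ℝ)}
    (hD : IsSimpleRatPolyomino D ∨ ∃ x, D = {x}) : IsConnected Dᶜ := by
  obtain hD | ⟨x, rfl⟩ := hD
  · exact hD.2.2
  · refine isConnected_compl_singleton_of_one_lt_rank ?_ x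
    rw [rank_prod', Module.rank_self]
    norm_num [one_add_one_eq_two]

theorem IsRatPolyomino.volume_sdiff_le {A : Set (ℝ × ℝ)} (hA : IsRatPolyomino A)
    (S : Set (ℝ × ℝ)) : volume (A \ S) ≤ volume (interior A \ S) :=
  measure_mono_ae ((ae_le_set.2 hA.volume_sdiff_interior).diff (Filter.EventuallyLE.refl _ S))

theorem exists_simple_polyomino_between_general {ι : Type*} [Finite ι] {U B : Set (ℝ × ℝ)}
    {D : ι → Set (ℝ × ℝ)} (hU : IsOpen U) (hUc : IsPreconnected U)
    (hB : IsSimpleRatPolyomino B ∨ ∃ x, B = {x}) (hD : ∀ i, IsClosed (D i))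
    (hDc : ∀ i, IsPreconnected (D i)ᶜ) (hBU : B ⊆ U) (hDU : ∀ i, D i ⊆ U)
    (hBD : ∀ i, Disjoint B (D i)) (hDD : Pairwise (Function.onFun Disjoint D)) {ρ : ℚ}
    (hBρ : volume B < ENNReal.ofReal ρ) (hρU : ENNReal.ofReal ρ < volume (U \ ⋃ i, D i)) :
    ∃ C, IsSimpleRatPolyomino C ∧ volume C = ENNReal.ofReal ρ ∧ B ⊆ C ∧ C ⊆ U \ ⋃ i, D i := by
  cases nonempty_fintype ι
  have hV : IsOpen (U \ ⋃ i, D i) := hU.sdiff (isClosed_iUnion_of_finite hD)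
  have hVc : IsPreconnected (U \ ⋃ i, D i) := by
    simpa only [Finset.mem_univ, iUnion_true] using
      isPreconnected_sdiff_biUnion (s := Finset.univ) hU hUc (fun i _ => hD i) (fun i _ => hDc i)
        (fun i _ => hDU i) (hDD.set_pairwise _)
  have hBV : B ⊆ U \ ⋃ i, D i := subset_sdiff.2 ⟨hBU, disjoint_iUnion_right.2 hBD⟩
  obtain hB | ⟨x, rfl⟩ := hB
  · exact hB.exists_superset_volume_eq hV hVc hBV hBρ hρU
  · obtain ⟨B', hB', hxB', hB'V, hB'ρ⟩ := exists_isSimpleRatPolyomino_mem_volume_lt hV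
      (singleton_subset_iff.1 hBV) (zero_le.trans_lt hBρ)
    obtain ⟨C, hC, hCρ, hB'C, hCV⟩ := hB'.exists_superset_volume_eq hV hVc hB'V hB'ρ hρU
    exact ⟨C, hC, hCρ, singleton_subset_iff.2 (hB'C hxB'), hCV⟩

/-- Lemma `poly`: given a simple rational polyomino `A` and pairwise
disjoint subsets `B, D₁, …, D_r` of its interior, each a simple rational polyomino or a
singleton, and a rational `ρ` with `ℒ B < ρ < ℒ(A \ ⋃ᵢ Dᵢ)`, there is a simple rational
polyomino `C` of area `ρ` with `B ⊆ C ⊆ A° \ ⋃ᵢ Dᵢ`. -/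
theorem exists_simple_polyomino_between
    (A B : Set (ℝ × ℝ)) (r : ℕ) (D : Fin r → Set (ℝ × ℝ))
    (hA : IsSimpleRatPolyomino A)
    (hB : IsSimpleRatPolyomino B ∨ ∃ x, B = {x})
    (hD : ∀ i, IsSimpleRatPolyomino (D i) ∨ ∃ x, D i = {x})
    (hBsub : B ⊆ interior A) (hDsub : ∀ i, D i ⊆ interior A)
    (hBD : ∀ i, Disjoint B (D i))
    (hDD : ∀ i j, i ≠ j → Disjoint (D i) (D j))
    (ρ : ℚ)
    (hρ₁ : volume B < ENNReal.ofReal (ρ : ℝ))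
    (hρ₂ : ENNReal.ofReal (ρ : ℝ) < volume (A \ ⋃ i, D i)) :
    ∃ C : Set (ℝ × ℝ), IsSimpleRatPolyomino C ∧ volume C = ENNReal.ofReal (ρ : ℝ) ∧
      B ⊆ C ∧ C ⊆ interior A \ ⋃ i, D i :=
  exists_simple_polyomino_between_general isOpen_interior hA.2.1.isPreconnected hB
    (fun i => isClosed_of_isSimpleRatPolyomino_or_singleton (hD i))
    (fun i => (isConnected_compl_of_isSimpleRatPolyomino_or_singleton (hD i)).isPreconnected)
    hBsub hDsub hBD hDD hρ₁ (hρ₂.trans_le (hA.1.volume_sdiff_le _))
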